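/- Fix α > 0, B_w > 1, and δ ∈ (0,1). Suppose d^D = d^{π_D} (the data distribution is the occupancy of the behavior policy), v*_{α,B_w} ∈ V, w*_{α,B_w} ∈ W, 0 ≤ w ≤ B_w for all w ∈ W, f is M_f-strongly convex with |f'(x)| ≤ B_{f'} and |f(x)| ≤ B_f for 0 ≤ x ≤ B_w, and ‖v‖_∞ ≤ B_v := (α·B_{f'}+1)/(1−γ) for all v ∈ V. Then with probability at least 1−δ, the output of PRO-RL satisfies J(π*_{α,B_w}) − J(π̂) ≤ (1/(1−γ))·E_{s∼d*_{α,B_w}}[‖π*_{α,B_w}(·|s) − π̂(·|s)‖₁] ≤ (2/(1−γ))·‖ŵ − w*_{α,B_w}‖_{2,d^D} ≤ (4/(1−γ))·√(ε_stat(B_w,B_f,B_v,B_e)/(α·M_f)), where B_e = (1+γ)B_v + 1. -/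

import Mathlib

open MeasureTheory
open scoped BigOperators ENNReal

namespace ProRL

/-- The discrete measure on a type induced by a real-valued weight function. -/
noncomputable def discMeasure {X : Type*} [MeasurableSpace X] (p : X → ℝ) : Measure X :=
  Measure.sum fun x => ENNReal.ofReal (p x) • Measure.dirac x

variable {S A : Type*} [Fintype S] [Fintype A]

/-- The `t`-step state-action distribution of policy `π` started from `μ0`. -/
noncomputable def saDist (P : S → A → S → ℝ) (μ0 : S → ℝ) (π : S → A → ℝ) :
    ℕ → S → A → ℝ
  | 0 => fun s a => μ0 s * π s a
  | t + 1 => fun s a =>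
      (∑ s' : S, ∑ a' : A, saDist P μ0 π t s' a' * P s' a' s) * π s a

/-- The discounted state-action occupancy `d^π(s,a)`. -/
noncomputable def occ (P : S → A → S → ℝ) (μ0 : S → ℝ) (γ : ℝ) (π : S → A → ℝ)
    (s : S) (a : A) : ℝ :=
  (1 - γ) * ∑' t : ℕ, γ ^ t * saDist P μ0 π t s a

/-- The (normalized) expected discounted return `J(π) = E_{d^π}[r]`. -/
noncomputable def Jret (P : S → A → S → ℝ) (r : S → A → ℝ) (μ0 : S → ℝ) (γ : ℝ)
    (π : S → A → ℝ) : ℝ :=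
  ∑ s : S, ∑ a : A, occ P μ0 γ π s a * r s a

/-- `π` is a (stationary, stochastic) policy. -/
def IsPolicy (π : S → A → ℝ) : Prop :=
  (∀ s a, 0 ≤ π s a) ∧ ∀ s, ∑ a : A, π s a = 1

/-- The Bellman residual `e_v(s,a) = r(s,a) + γ ∑_{s'} P(s'|s,a) v(s') − v(s)`. -/
noncomputable def eV (P : S → A → S → ℝ) (r : S → A → ℝ) (γ : ℝ) (v : S → ℝ)
    (s : S) (a : A) : ℝ :=
  r s a + γ * ∑ s' : S, P s a s' * v s' - v s

/-- The population Lagrangian `L_α(v,w)`. -/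
noncomputable def Lag (P : S → A → S → ℝ) (r : S → A → ℝ) (μ0 : S → ℝ) (γ : ℝ)
    (dD : S → A → ℝ) (f : ℝ → ℝ) (α : ℝ) (v : S → ℝ) (w : S → A → ℝ) : ℝ :=
  (1 - γ) * ∑ s : S, μ0 s * v s
    - α * ∑ s : S, ∑ a : A, dD s a * f (w s a)
    + ∑ s : S, ∑ a : A, dD s a * (w s a * eV P r γ v s a)

/-- The empirical Lagrangian `L̂_α(v,w)` built from the transition dataset `D`
(`D i = ((sᵢ,aᵢ), s'ᵢ)`, with `rᵢ = r sᵢ aᵢ`) and initial-state dataset `D0`. -/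
noncomputable def empLag (r : S → A → ℝ) (γ : ℝ) (f : ℝ → ℝ) (α : ℝ) {n n0 : ℕ}
    (D : Fin n → (S × A) × S) (D0 : Fin n0 → S) (v : S → ℝ) (w : S → A → ℝ) : ℝ :=
  (1 - γ) * ((n0 : ℝ)⁻¹ * ∑ j : Fin n0, v (D0 j))
    - α * ((n : ℝ)⁻¹ * ∑ i : Fin n, f (w (D i).1.1 (D i).1.2))
    + (n : ℝ)⁻¹ * ∑ i : Fin n,
        w (D i).1.1 (D i).1.2 *
          (r (D i).1.1 (D i).1.2 + γ * v (D i).2 - v (D i).1.1)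

/-- Per-state normalization of a state-action weight into a policy
(uniform where the state marginal is not positive). -/
noncomputable def normPolicy (d : S → A → ℝ) (s : S) (a : A) : ℝ :=
  if 0 < ∑ a' : A, d s a' then d s a / ∑ a' : A, d s a'
  else (Fintype.card A : ℝ)⁻¹

/-- Policy extraction from a density ratio `w` and a behavior policy `piD`
(uniform where the normalizer vanishes). -/
noncomputable def extractPolicy (piD w : S → A → ℝ) (s : S) (a : A) : ℝ :=
  if 0 < ∑ a' : A, w s a' * piD s a' then
    w s a * piD s a / ∑ a' : A, w s a' * piD s a'
  else (Fintype.card A : ℝ)⁻¹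

/-- Behavior policy `π_D(a|s)` obtained from the data distribution `d^D`. -/
noncomputable def behPolicy (dD : S → A → ℝ) : S → A → ℝ := normPolicy dD

/-- The state-action measure `d(s,a) = w(s,a)·d^D(s,a)`. -/
noncomputable def dstar (dD w : S → A → ℝ) : S → A → ℝ := fun s a => w s a * dD s a

/-- The weighted `L²(d^D)` norm of a state-action function. -/
noncomputable def l2nrm (dD g : S → A → ℝ) : ℝ :=
  Real.sqrt (∑ s : S, ∑ a : A, dD s a * g s a ^ 2)

/-- `‖π(·|s) − π'(·|s)‖₁`. -/
noncomputable def l1Pol (π π' : S → A → ℝ) (s : S) : ℝ := ∑ a : A, |π s a - π' s a|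

/-- `E_{s ∼ d}[‖π(·|s) − π'(·|s)‖₁]` where `d` is a state-action distribution. -/
noncomputable def expL1 (d π π' : S → A → ℝ) : ℝ :=
  ∑ s : S, (∑ a : A, d s a) * l1Pol π π' s

/-- The statistical error term `ε_stat`. -/
noncomputable def epsStat (γ α Bv Bf Bw Be δ : ℝ) (nV nW n n0 : ℕ) : ℝ :=
  (1 - γ) * Bv * Real.sqrt (2 * Real.log (4 * (nV : ℝ) / δ) / (n0 : ℝ))
    + (α * Bf + Bw * Be) *
        Real.sqrt (2 * Real.log (4 * ((nV : ℝ) * (nW : ℝ)) / δ) / (n : ℝ))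

/-- The Bellman flow equations for a state-action measure `d`. -/
def BellmanFlow (P : S → A → S → ℝ) (μ0 : S → ℝ) (γ : ℝ) (d : S → A → ℝ) : Prop :=
  ∀ s : S, ∑ a : A, d s a
    = (1 - γ) * μ0 s + γ * ∑ s' : S, ∑ a' : A, P s' a' s * d s' a'

/-- `(v,w)` is a saddle point of `max_{w ≥ 0} min_v L_α(v,w)`. -/
def IsSaddle (P : S → A → S → ℝ) (r : S → A → ℝ) (μ0 : S → ℝ) (γ : ℝ)
    (dD : S → A → ℝ) (f : ℝ → ℝ) (α : ℝ) (v : S → ℝ) (w : S → A → ℝ) : Prop :=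
  (∀ s a, 0 ≤ w s a) ∧
  (∀ v' : S → ℝ, Lag P r μ0 γ dD f α v w ≤ Lag P r μ0 γ dD f α v' w) ∧
  (∀ w' : S → A → ℝ, (∀ s a, 0 ≤ w' s a) →
    Lag P r μ0 γ dD f α v w' ≤ Lag P r μ0 γ dD f α v w)

/-- `(v,w)` is a saddle point of `max_{0 ≤ w ≤ Bw} min_v L_α(v,w)` (constrained LP). -/
def IsSaddleB (P : S → A → S → ℝ) (r : S → A → ℝ) (μ0 : S → ℝ) (γ : ℝ)
    (dD : S → A → ℝ) (f : ℝ → ℝ) (α Bw : ℝ) (v : S → ℝ) (w : S → A → ℝ) : Prop :=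
  (∀ s a, 0 ≤ w s a ∧ w s a ≤ Bw) ∧
  (∀ v' : S → ℝ, Lag P r μ0 γ dD f α v w ≤ Lag P r μ0 γ dD f α v' w) ∧
  (∀ w' : S → A → ℝ, (∀ s a, 0 ≤ w' s a ∧ w' s a ≤ Bw) →
    Lag P r μ0 γ dD f α v w' ≤ Lag P r μ0 γ dD f α v w)

/-- `(vhat, what)` is an exact max-min point of the empirical Lagrangian over `V × W`:
`vhat ∈ argmin_{v ∈ V} L̂(v, what)` and `what ∈ argmax_{w ∈ W} min_{v ∈ V} L̂(v, w)`. -/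
def IsProRLOutput (r : S → A → ℝ) (γ : ℝ) (f : ℝ → ℝ) (α : ℝ)
    (V : Finset (S → ℝ)) (W : Finset (S → A → ℝ)) {n n0 : ℕ}
    (D : Fin n → (S × A) × S) (D0 : Fin n0 → S)
    (vhat : S → ℝ) (what : S → A → ℝ) : Prop :=
  vhat ∈ V ∧ what ∈ W ∧
  (∀ v ∈ V, empLag r γ f α D D0 vhat what ≤ empLag r γ f α D D0 v what) ∧
  ∀ w ∈ W, ∀ vw ∈ V,
    (∀ v ∈ V, empLag r γ f α D D0 vw w ≤ empLag r γ f α D D0 v w) →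
      empLag r γ f α D D0 vw w ≤ empLag r γ f α D D0 vhat what

/-- Weight of a transition tuple `((s,a),s')` under `(s,a) ∼ d^D`, `s' ∼ P(·|s,a)`. -/
noncomputable def tupleWeight (P : S → A → S → ℝ) (dD : S → A → ℝ)
    (x : (S × A) × S) : ℝ :=
  dD x.1.1 x.1.2 * P x.1.1 x.1.2 x.2

/-- The joint law of the transition dataset `D` (i.i.d. from `d^D ⊗ P`) and the
initial-state dataset `D0` (i.i.d. from `μ0`). -/
noncomputable def dataMeasure [MeasurableSpace S] [MeasurableSpace A]
    (P : S → A → S → ℝ) (dD : S → A → ℝ) (μ0 : S → ℝ) (n n0 : ℕ) :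
    Measure ((Fin n → (S × A) × S) × (Fin n0 → S)) :=
  (Measure.pi fun _ : Fin n => discMeasure (tupleWeight P dD)).prod
    (Measure.pi fun _ : Fin n0 => discMeasure μ0)

/-- The joint law of datasets `D1`, `D2` (both i.i.d. from `d^D ⊗ P`) and `D0`
(i.i.d. from `μ0`), used by PRO-RL-BC. -/
noncomputable def dataMeasure3 [MeasurableSpace S] [MeasurableSpace A]
    (P : S → A → S → ℝ) (dD : S → A → ℝ) (μ0 : S → ℝ) (n1 n2 n0 : ℕ) :
    Measure ((Fin n1 → (S × A) × S) × (Fin n2 → (S × A) × S) × (Fin n0 → S)) :=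
  (Measure.pi fun _ : Fin n1 => discMeasure (tupleWeight P dD)).prod
    ((Measure.pi fun _ : Fin n2 => discMeasure (tupleWeight P dD)).prod
      (Measure.pi fun _ : Fin n0 => discMeasure μ0))

/-- `v` is the optimal value function: it satisfies the Bellman optimality equation. -/
def IsOptValue [Nonempty A] (P : S → A → S → ℝ) (r : S → A → ℝ) (γ : ℝ)
    (v : S → ℝ) : Prop :=
  ∀ s : S, v s = Finset.univ.sup' Finset.univ_nonempty
    (fun a : A => r s a + γ * ∑ s' : S, P s a s' * v s')

/-- Basic assumptions on the MDP, the regularizer-free data, and the data distribution. -/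
structure MDPAssumptions (P : S → A → S → ℝ) (r : S → A → ℝ) (μ0 : S → ℝ) (γ : ℝ)
    (dD : S → A → ℝ) : Prop where
  P_nonneg : ∀ s a s', 0 ≤ P s a s'
  P_sum : ∀ s a, ∑ s' : S, P s a s' = 1
  r_nonneg : ∀ s a, 0 ≤ r s a
  r_le_one : ∀ s a, r s a ≤ 1
  γ_nonneg : 0 ≤ γ
  γ_lt_one : γ < 1
  μ0_pos : ∀ s, 0 < μ0 s
  μ0_sum : ∑ s : S, μ0 s = 1
  dD_nonneg : ∀ s a, 0 ≤ dD s a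
  dD_sum : ∑ s : S, ∑ a : A, dD s a = 1

/-- Regularity of the regularizer `f`: continuously differentiable with derivative `f'`,
`M_f`-strongly convex, and with `|f'| ≤ Bf'`, `|f| ≤ Bf` on `[0, Bw]`. -/
structure RegAssumptions (f f' : ℝ → ℝ) (Mf Bw Bf' Bf : ℝ) : Prop where
  deriv : ∀ x, HasDerivAt f (f' x) x
  strong : StrongConvexOn Set.univ Mf f
  Mf_pos : 0 < Mf
  f'_bdd : ∀ x, 0 ≤ x → x ≤ Bw → |f' x| ≤ Bf'
  f_bdd : ∀ x, 0 ≤ x → x ≤ Bw → |f x| ≤ Bf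

/-- `w` is an optimal density ratio of the unregularized LP (the set `W*₀`). -/
def OptRatio (P : S → A → S → ℝ) (r : S → A → ℝ) (μ0 : S → ℝ) (γ : ℝ)
    (dD : S → A → ℝ) (w : S → A → ℝ) : Prop :=
  (∀ s a, 0 ≤ w s a) ∧ BellmanFlow P μ0 γ (dstar dD w) ∧
  ∀ w' : S → A → ℝ, (∀ s a, 0 ≤ w' s a) → BellmanFlow P μ0 γ (dstar dD w') →
    ∑ s : S, ∑ a : A, dstar dD w' s a * r s a
      ≤ ∑ s : S, ∑ a : A, dstar dD w s a * r s a

section Concentration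

variable {X : Type*} [MeasurableSpace X]

/-- One-sided Hoeffding inequality for the sum of i.i.d. samples of a bounded function. -/
lemma hoeffding_sum_ge (ν : Measure X) [IsProbabilityMeasure ν] {n : ℕ} (hn : 0 < n)
    {g : X → ℝ} (hg : Measurable g) {C L : ℝ} (hC : 0 < C) (hL : 0 ≤ L)
    (hb : ∀ x, |g x| ≤ C) :
    (Measure.pi fun _ : Fin n => ν).real
        {D | n * (C * Real.sqrt (2 * L / n)) ≤ ∑ i, (g (D i) - ∫ x, g x ∂ν)}
      ≤ Real.exp (-L) := by
  have hindep : ProbabilityTheory.iIndepFun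
      (fun (i : Fin n) (D : Fin n → X) => g (D i) - ∫ x, g x ∂ν)
      (Measure.pi fun _ : Fin n => ν) :=
    ProbabilityTheory.iIndepFun_pi (μ := fun _ : Fin n => ν)
      (X := fun (_ : Fin n) x => g x - ∫ x, g x ∂ν)
      fun _ => (hg.sub_const _).aemeasurable
  have hsub : ∀ i ∈ (Finset.univ : Finset (Fin n)),
      ProbabilityTheory.HasSubgaussianMGF
        (fun D : Fin n → X => g (D i) - ∫ x, g x ∂ν) ((‖C - -C‖₊ / 2) ^ 2)
        (Measure.pi fun _ : Fin n => ν) := by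
    intro i _
    have hint : ∫ D : Fin n → X, g (D i) ∂(Measure.pi fun _ : Fin n => ν) = ∫ x, g x ∂ν :=
      integral_comp_eval (μ := fun _ : Fin n => ν) (i := i) hg.aestronglyMeasurable
    have := ProbabilityTheory.hasSubgaussianMGF_of_mem_Icc (a := -C) (b := C)
      (μ := Measure.pi fun _ : Fin n => ν) (X := fun D : Fin n → X => g (D i))
      (hg.comp (measurable_pi_apply i)).aemeasurable
      (Filter.Eventually.of_forall fun D => abs_le.mp (hb (D i)))
    rwa [hint] at this
  have hn' : (0 : ℝ) < n := by exact_mod_cast hn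
  refine (ProbabilityTheory.HasSubgaussianMGF.measure_sum_ge_le_of_iIndepFun hindep hsub
    (by positivity)).trans (le_of_eq ?_)
  congr 1
  have hC2 : ((((‖C - -C‖₊ / 2) ^ 2 : NNReal)) : ℝ) = C ^ 2 := by
    push_cast
    rw [Real.norm_eq_abs, div_pow, sq_abs]
    ring
  rw [Finset.sum_const, Finset.card_univ, Fintype.card_fin, nsmul_eq_mul, NNReal.coe_mul, hC2,
    NNReal.coe_natCast, mul_pow, mul_pow, Real.sq_sqrt (by positivity)]
  field_simp

/-- Two-sided Hoeffding inequality for the empirical mean of a bounded function. -/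
lemma hoeffding_abs_mean (ν : Measure X) [IsProbabilityMeasure ν] {n : ℕ} (hn : 0 < n)
    {g : X → ℝ} (hg : Measurable g) {C L : ℝ} (hC : 0 < C) (hL : 0 ≤ L)
    (hb : ∀ x, |g x| ≤ C) :
    (Measure.pi fun _ : Fin n => ν)
        {D | C * Real.sqrt (2 * L / n) < |(n : ℝ)⁻¹ * ∑ i, g (D i) - ∫ x, g x ∂ν|}
      ≤ ENNReal.ofReal (2 * Real.exp (-L)) := by
  have hn' : (0 : ℝ) < n := by exact_mod_cast hn
  have hpos := hoeffding_sum_ge ν hn hg hC hL hb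
  have hneg := hoeffding_sum_ge ν hn hg.neg hC hL (fun x => by simpa using hb x)
  rw [← ofReal_measureReal]
  apply ENNReal.ofReal_le_ofReal
  refine (measureReal_mono (s₂ := _ ∪ _) ?_).trans
    ((measureReal_union_le _ _).trans ((add_le_add hpos hneg).trans_eq (two_mul _).symm))
  intro D hD
  simp only [Set.mem_ofPred_eq, Set.mem_union, Pi.neg_apply, integral_neg,
    Finset.sum_sub_distrib, Finset.sum_neg_distrib, Finset.sum_const, Finset.card_univ,
    Fintype.card_fin, nsmul_eq_mul] at hD ⊢
  have hmean : ∑ i, g (D i) = n * ((n : ℝ)⁻¹ * ∑ i, g (D i)) := by field_simp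
  rcases lt_abs.mp hD with h | h
  · left
    rw [hmean, ← mul_sub]
    exact mul_le_mul_of_nonneg_left h.le hn'.le
  · right
    rw [hmean]
    have := mul_le_mul_of_nonneg_left h.le hn'.le
    linarith

/-- Uniform version of `hoeffding_abs_mean` over a finite family of functions. -/
lemma hoeffding_abs_mean_uniform (ν : Measure X) [IsProbabilityMeasure ν] {n : ℕ} (hn : 0 < n)
    {ι : Type*} (T : Finset ι) {g : ι → X → ℝ} (hg : ∀ k, Measurable (g k)) {C δ : ℝ}
    (hC : 0 < C) (hδ0 : 0 < δ) (hδ1 : δ < 1) (hb : ∀ k ∈ T, ∀ x, |g k x| ≤ C) :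
    (Measure.pi fun _ : Fin n => ν)
        {D | ∃ k ∈ T, C * Real.sqrt (2 * Real.log (4 * (T.card : ℝ) / δ) / n)
          < |(n : ℝ)⁻¹ * ∑ i, g k (D i) - ∫ x, g k x ∂ν|}
      ≤ ENNReal.ofReal (δ / 2) := by
  rcases T.eq_empty_or_nonempty with rfl | hT
  · simp
  have hcard : (1 : ℝ) ≤ T.card := by exact_mod_cast hT.card_pos
  have hL : 0 ≤ Real.log (4 * (T.card : ℝ) / δ) :=
    Real.log_nonneg (by rw [le_div_iff₀ hδ0]; linarith)
  have hset : {D : Fin n → X | ∃ k ∈ T, C * Real.sqrt (2 * Real.log (4 * (T.card : ℝ) / δ) / n)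
          < |(n : ℝ)⁻¹ * ∑ i, g k (D i) - ∫ x, g k x ∂ν|}
      = ⋃ k ∈ T, {D | C * Real.sqrt (2 * Real.log (4 * (T.card : ℝ) / δ) / n)
          < |(n : ℝ)⁻¹ * ∑ i, g k (D i) - ∫ x, g k x ∂ν|} := by
    ext D
    simp
  rw [hset]
  refine (measure_biUnion_finset_le _ _).trans ((Finset.sum_le_sum fun k hk =>
    hoeffding_abs_mean ν hn (hg k) hC hL (hb k hk)).trans_eq ?_)
  rw [Finset.sum_const, ← ENNReal.ofReal_nsmul, Real.exp_neg, Real.exp_log (by positivity)]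
  congr 1
  rw [nsmul_eq_mul]
  field_simp
  norm_num

/-- A union bound for two independent bad events. -/
lemma one_sub_ofReal_le_prod {Y : Type*} [MeasurableSpace Y] (μ : Measure X) (ν : Measure Y)
    [IsProbabilityMeasure μ] [IsProbabilityMeasure ν] {a : Set X} {b : Set Y} {δ : ℝ}
    (hδ : 0 ≤ δ) (ha : μ a ≤ ENNReal.ofReal (δ / 2)) (hb : ν b ≤ ENNReal.ofReal (δ / 2))
    {G : Set (X × Y)} (hG : ∀ ω, ω.1 ∉ a → ω.2 ∉ b → ω ∈ G) :
    1 - ENNReal.ofReal δ ≤ μ.prod ν G := by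
  have hcover : (Set.univ : Set (X × Y)) ⊆ G ∪ (a ×ˢ Set.univ ∪ Set.univ ×ˢ b) := by
    intro ω _
    by_cases h1 : ω.1 ∈ a
    · exact Or.inr (Or.inl ⟨h1, trivial⟩)
    by_cases h2 : ω.2 ∈ b
    · exact Or.inr (Or.inr ⟨trivial, h2⟩)
    exact Or.inl (hG ω h1 h2)
  rw [tsub_le_iff_right, ← measure_univ (μ := μ.prod ν)]
  refine (measure_mono hcover).trans ((measure_union_le _ _).trans (add_le_add le_rfl ?_))
  refine (measure_union_le _ _).trans ?_
  rw [Measure.prod_prod, Measure.prod_prod, measure_univ, measure_univ, mul_one, one_mul,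
    ← add_halves δ, ENNReal.ofReal_add (by linarith) (by linarith)]
  exact add_le_add ha hb

variable [Fintype X]

lemma isProbabilityMeasure_discMeasure {p : X → ℝ} (hp : ∀ x, 0 ≤ p x) (hsum : ∑ x, p x = 1) :
    IsProbabilityMeasure (discMeasure p) where
  measure_univ := by
    rw [discMeasure, Measure.sum_apply _ MeasurableSet.univ, tsum_fintype]
    simp only [Measure.smul_apply, measure_univ, smul_eq_mul, mul_one]
    rw [← ENNReal.ofReal_sum_of_nonneg fun x _ => hp x, hsum, ENNReal.ofReal_one]

variable [MeasurableSingletonClass X]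

lemma discMeasure_singleton (p : X → ℝ) (x : X) :
    discMeasure p {x} = ENNReal.ofReal (p x) := by
  classical
  rw [discMeasure, Measure.sum_apply _ (measurableSet_singleton x), tsum_fintype,
    Finset.sum_eq_single x]
  · simp
  · intro y _ hy
    simp [hy]
  · simp

lemma integral_discMeasure {p : X → ℝ} (hp : ∀ x, 0 ≤ p x) (hsum : ∑ x, p x = 1) (g : X → ℝ) :
    ∫ x, g x ∂(discMeasure p) = ∑ x, p x * g x := by
  have := isProbabilityMeasure_discMeasure hp hsum
  rw [integral_fintype .of_finite]
  refine Finset.sum_congr rfl fun x _ => ?_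
  rw [measureReal_def, discMeasure_singleton, ENNReal.toReal_ofReal (hp x), smul_eq_mul]

end Concentration

section Occupancy

variable {P : S → A → S → ℝ} {r : S → A → ℝ} {μ0 : S → ℝ} {γ : ℝ} {dD : S → A → ℝ}

lemma normPolicy_isPolicy [Nonempty A] {d : S → A → ℝ} (hd : ∀ s a, 0 ≤ d s a) :
    IsPolicy (normPolicy d) := by
  refine ⟨fun s a => ?_, fun s => ?_⟩
  · unfold normPolicy
    split_ifs with h
    · exact div_nonneg (hd s a) h.le
    · positivity
  · unfold normPolicy
    split_ifs with h
    · rw [← Finset.sum_div, div_self h.ne']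
    · simp

/-- A nonnegative weight factors as its state marginal times its normalization. -/
lemma eq_sum_mul_normPolicy {d : S → A → ℝ} (hd : ∀ s a, 0 ≤ d s a) (s : S) (a : A) :
    d s a = (∑ a', d s a') * normPolicy d s a := by
  unfold normPolicy
  split_ifs with h
  · rw [mul_div_cancel₀ _ h.ne']
  · have h0 : ∑ a', d s a' = 0 := le_antisymm (not_lt.mp h) (Finset.sum_nonneg fun a _ => hd s a)
    rw [h0, zero_mul]
    exact (Finset.sum_eq_zero_iff_of_nonneg fun a _ => hd s a).mp h0 a (Finset.mem_univ a)

lemma extractPolicy_isPolicy [Nonempty A] {w : S → A → ℝ} (hdD : ∀ s a, 0 ≤ dD s a)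
    (hw : ∀ s a, 0 ≤ w s a) : IsPolicy (extractPolicy (behPolicy dD) w) := by
  exact normPolicy_isPolicy (d := fun s a => w s a * behPolicy dD s a) fun s a =>
    mul_nonneg (hw s a) ((normPolicy_isPolicy hdD).1 s a)

/-- The weight `w · d^D` factors as its state marginal times the extracted policy. -/
lemma dstar_eq_sum_mul_extractPolicy [Nonempty A] {w : S → A → ℝ} (hdD : ∀ s a, 0 ≤ dD s a)
    (hw : ∀ s a, 0 ≤ w s a) (s : S) (a : A) :
    dstar dD w s a = (∑ a', dstar dD w s a') * extractPolicy (behPolicy dD) w s a := by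
  have hfac : ∀ a, dstar dD w s a = (∑ a', dD s a') * (w s a * behPolicy dD s a) := fun a => by
    rw [dstar, eq_sum_mul_normPolicy hdD s a, behPolicy]
    ring
  have hnorm := eq_sum_mul_normPolicy (d := fun s a => w s a * behPolicy dD s a)
    (fun s a => mul_nonneg (hw s a) ((normPolicy_isPolicy hdD).1 s a)) s a
  simp only [hfac, ← Finset.mul_sum]
  rw [mul_assoc]
  exact congrArg _ hnorm

lemma saDist_nonneg (hP : ∀ s a s', 0 ≤ P s a s') (hμ : ∀ s, 0 ≤ μ0 s) {π : S → A → ℝ}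
    (hπ : IsPolicy π) (t : ℕ) (s : S) (a : A) : 0 ≤ saDist P μ0 π t s a := by
  induction t generalizing s a with
  | zero => exact mul_nonneg (hμ s) (hπ.1 s a)
  | succ t ih =>
    exact mul_nonneg (Finset.sum_nonneg fun s' _ => Finset.sum_nonneg fun a' _ =>
      mul_nonneg (ih s' a') (hP s' a' s)) (hπ.1 s a)

lemma sum_saDist (hP : ∀ s a, ∑ s', P s a s' = 1) (hμ : ∑ s, μ0 s = 1) {π : S → A → ℝ}
    (hπ : IsPolicy π) (t : ℕ) : ∑ s, ∑ a, saDist P μ0 π t s a = 1 := by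
  induction t with
  | zero => simp only [saDist, ← Finset.mul_sum, hπ.2, mul_one, hμ]
  | succ t ih =>
    simp only [saDist, ← Finset.mul_sum, hπ.2, mul_one]
    rw [Finset.sum_comm]
    simp_rw [Finset.sum_comm (s := (Finset.univ : Finset S)) (t := (Finset.univ : Finset A)),
      ← Finset.mul_sum, hP, mul_one]
    rw [Finset.sum_comm]
    exact ih

lemma summable_discounted_saDist (h : MDPAssumptions P r μ0 γ dD) {π : S → A → ℝ}
    (hπ : IsPolicy π) (s : S) (a : A) :
    Summable fun t : ℕ => γ ^ t * saDist P μ0 π t s a := by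
  have hnn := saDist_nonneg h.P_nonneg (fun s => (h.μ0_pos s).le) hπ
  refine Summable.of_nonneg_of_le (fun t => mul_nonneg (pow_nonneg h.γ_nonneg t) (hnn t s a))
    (fun t => ?_) (summable_geometric_of_lt_one h.γ_nonneg h.γ_lt_one)
  refine mul_le_of_le_one_right (pow_nonneg h.γ_nonneg t) ?_
  rw [← sum_saDist h.P_sum h.μ0_sum hπ t]
  exact (Finset.single_le_sum (fun a _ => hnn t s a) (Finset.mem_univ a)).trans
    (Finset.single_le_sum (f := fun s => ∑ a, saDist P μ0 π t s a)
      (fun s _ => Finset.sum_nonneg fun a _ => hnn t s a) (Finset.mem_univ s))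

/-- The occupancy solves the policy-wise Bellman flow equation. -/
lemma occ_eq (h : MDPAssumptions P r μ0 γ dD) {π : S → A → ℝ} (hπ : IsPolicy π) (s : S) (a : A) :
    occ P μ0 γ π s a
      = ((1 - γ) * μ0 s + γ * ∑ s', ∑ a', P s' a' s * occ P μ0 γ π s' a') * π s a := by
  have hsum := summable_discounted_saDist h hπ
  have hstep : ∑' t : ℕ, γ ^ (t + 1) * saDist P μ0 π (t + 1) s a
      = γ * (∑ s', ∑ a', P s' a' s * ∑' t : ℕ, γ ^ t * saDist P μ0 π t s' a') * π s a := by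
    have hS : ∀ s' a', Summable fun t : ℕ => P s' a' s * (γ ^ t * saDist P μ0 π t s' a') :=
      fun s' a' => (hsum s' a').mul_left _
    simp_rw [← tsum_mul_left]
    simp_rw [← Summable.tsum_finsetSum fun a' (_ : a' ∈ Finset.univ) => hS _ a']
    rw [← Summable.tsum_finsetSum fun s' _ => summable_sum fun a' _ => hS s' a',
      ← tsum_mul_left, ← tsum_mul_right]
    refine tsum_congr fun t => ?_
    simp only [saDist, Finset.mul_sum, Finset.sum_mul]
    exact Finset.sum_congr rfl fun s' _ => Finset.sum_congr rfl fun a' _ => by ring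
  have hocc : occ P μ0 γ π s a = (1 - γ) * ((μ0 s * π s a)
      + γ * (∑ s', ∑ a', P s' a' s * ∑' t : ℕ, γ ^ t * saDist P μ0 π t s' a') * π s a) := by
    rw [occ, (hsum s a).tsum_eq_zero_add, hstep]
    simp [saDist]
  have hpull : ∑ s', ∑ a', P s' a' s * occ P μ0 γ π s' a' = (1 - γ) *
      ∑ s', ∑ a', P s' a' s * ∑' t : ℕ, γ ^ t * saDist P μ0 π t s' a' := by
    simp only [occ, Finset.mul_sum]
    exact Finset.sum_congr rfl fun s' _ => Finset.sum_congr rfl fun a' _ => by ring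
  rw [hocc, hpull]
  ring

lemma bellmanFlow_occ (h : MDPAssumptions P r μ0 γ dD) {π : S → A → ℝ} (hπ : IsPolicy π) :
    BellmanFlow P μ0 γ (occ P μ0 γ π) := fun s => by
  rw [Finset.sum_congr rfl fun a _ => occ_eq h hπ s a, ← Finset.mul_sum, hπ.2, mul_one]

lemma occ_eq_sum_mul (h : MDPAssumptions P r μ0 γ dD) {π : S → A → ℝ} (hπ : IsPolicy π)
    (s : S) (a : A) : occ P μ0 γ π s a = (∑ a', occ P μ0 γ π s a') * π s a := by
  rw [bellmanFlow_occ h hπ s]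
  exact occ_eq h hπ s a

/-- Pushing a state-action weight through the transition kernel is adjoint to averaging. -/
lemma sum_mul_transition (d : S → A → ℝ) (u : S → ℝ) :
    ∑ s, ∑ a, d s a * ∑ s', P s a s' * u s'
      = ∑ s', (∑ s, ∑ a, P s a s' * d s a) * u s' := by
  simp only [Finset.mul_sum, Finset.sum_mul]
  rw [Finset.sum_comm (s := (Finset.univ : Finset S)) (t := (Finset.univ : Finset S))]
  refine Finset.sum_congr rfl fun s _ => ?_
  rw [Finset.sum_comm]
  exact Finset.sum_congr rfl fun s _ => Finset.sum_congr rfl fun a' _ => by ring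

/-- Pairing the Bellman flow equations with a value function. -/
lemma BellmanFlow.sum_mul_eV {d : S → A → ℝ} (hd : BellmanFlow P μ0 γ d) (v : S → ℝ) :
    ∑ s, ∑ a, d s a * eV P r γ v s a
      = ∑ s, ∑ a, d s a * r s a - (1 - γ) * ∑ s, μ0 s * v s := by
  have h1 : ∑ s, (∑ a, d s a) * v s
      = (1 - γ) * ∑ s, μ0 s * v s + γ * ∑ s, ∑ a, d s a * ∑ s', P s a s' * v s' := by
    rw [sum_mul_transition, Finset.mul_sum, Finset.mul_sum, ← Finset.sum_add_distrib]
    refine Finset.sum_congr rfl fun s _ => ?_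
    rw [hd s]
    ring
  have h3 : ∑ s, ∑ a, d s a * eV P r γ v s a = ∑ s, ∑ a, d s a * r s a
      + γ * ∑ s, ∑ a, d s a * (∑ s', P s a s' * v s') - ∑ s, (∑ a, d s a) * v s := by
    simp only [Finset.mul_sum, Finset.sum_mul, ← Finset.sum_add_distrib, ← Finset.sum_sub_distrib]
    refine Finset.sum_congr rfl fun s _ => Finset.sum_congr rfl fun a _ => ?_
    simp only [eV, ← Finset.mul_sum]
    rw [mul_sub, mul_add]
    ring
  rw [h3, h1]
  ring

/-- The expected reward of a flow with conditional `π`, through the value function of `π`. -/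
lemma BellmanFlow.sum_mul_reward {d π : S → A → ℝ} (hd : BellmanFlow P μ0 γ d)
    (hfac : ∀ s a, d s a = (∑ a', d s a') * π s a) {v : S → ℝ}
    (hv : ∀ s, ∑ a, π s a * eV P r γ v s a = 0) :
    ∑ s, ∑ a, d s a * r s a = (1 - γ) * ∑ s, μ0 s * v s := by
  have h0 : ∑ s, ∑ a, d s a * eV P r γ v s a = 0 :=
    Finset.sum_eq_zero fun s _ => by
      rw [Finset.sum_congr rfl fun a _ => by rw [hfac s a, mul_assoc], ← Finset.mul_sum, hv s,
        mul_zero]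
  linarith [hd.sum_mul_eV (r := r) v]

/-- Every policy has a value function, with values in `[0, 1/(1-γ)]`. -/
lemma exists_value [Nonempty S] (h : MDPAssumptions P r μ0 γ dD) {π : S → A → ℝ}
    (hπ : IsPolicy π) :
    ∃ v : S → ℝ, (∀ s, ∑ a, π s a * eV P r γ v s a = 0) ∧
      ∀ s, 0 ≤ v s ∧ v s ≤ 1 / (1 - γ) := by
  have hγ : 0 < 1 - γ := by linarith [h.γ_lt_one]
  have hK : ∀ (v : S → ℝ) (m : ℝ), (∀ s, m ≤ v s) →
      ∀ s, m ≤ ∑ a, π s a * ∑ s', P s a s' * v s' := by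
    intro v m hm s
    calc m = ∑ a, π s a * ∑ s', P s a s' * m := by
          simp only [← Finset.sum_mul, h.P_sum, one_mul, hπ.2]
      _ ≤ _ := Finset.sum_le_sum fun a _ => mul_le_mul_of_nonneg_left
          (Finset.sum_le_sum fun s' _ => mul_le_mul_of_nonneg_left (hm s') (h.P_nonneg s a s'))
          (hπ.1 s a)
  have hmin : ∀ (v b : S → ℝ), (∀ s, v s - γ * ∑ a, π s a * ∑ s', P s a s' * v s' = b s) →
      (∀ s, 0 ≤ b s) → ∀ s, 0 ≤ v s := by
    intro v b hv hb
    obtain ⟨s0, hs0⟩ := Finite.exists_min v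
    have h1 := mul_le_mul_of_nonneg_left (hK v (v s0) hs0 s0) h.γ_nonneg
    have h2 : 0 ≤ (1 - γ) * v s0 := by linarith [hv s0, hb s0]
    exact fun s => (nonneg_of_mul_nonneg_right h2 hγ).trans (hs0 s)
  let T : (S → ℝ) →ₗ[ℝ] (S → ℝ) :=
    { toFun := fun v s => v s - γ * ∑ a, π s a * ∑ s', P s a s' * v s'
      map_add' := fun u v => by
        ext s
        simp only [Pi.add_apply, mul_add, Finset.sum_add_distrib]
        ring
      map_smul' := fun c v => by
        ext s
        simp only [Pi.smul_apply, smul_eq_mul, RingHom.id_apply, mul_sub, Finset.mul_sum]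
        congr 1
        exact Finset.sum_congr rfl fun a _ => Finset.sum_congr rfl fun s' _ => by ring }
  have hinj : Function.Injective T := by
    rw [← LinearMap.ker_eq_bot, LinearMap.ker_eq_bot']
    intro v hv
    have hneg : T (-v) = 0 := by rw [map_neg, hv, neg_zero]
    ext s
    exact le_antisymm
      (by simpa using hmin (-v) 0 (fun s => congrFun hneg s) (fun _ => le_rfl) s)
      (hmin v 0 (fun s => congrFun hv s) (fun _ => le_rfl) s)
  obtain ⟨v, hv⟩ := (LinearMap.injective_iff_surjective.mp hinj) fun s => ∑ a, π s a * r s a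
  have hvs : ∀ s, v s - γ * ∑ a, π s a * ∑ s', P s a s' * v s' = ∑ a, π s a * r s a :=
    fun s => congrFun hv s
  refine ⟨v, fun s => ?_, fun s => ⟨hmin v _ hvs (fun s => Finset.sum_nonneg fun a _ =>
    mul_nonneg (hπ.1 s a) (h.r_nonneg s a)) s, ?_⟩⟩
  · have h1 : ∑ a, π s a * eV P r γ v s a = ∑ a, π s a * r s a
        + γ * ∑ a, π s a * (∑ s', P s a s' * v s') - (∑ a, π s a) * v s := by
      rw [Finset.mul_sum, Finset.sum_mul, ← Finset.sum_add_distrib, ← Finset.sum_sub_distrib]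
      exact Finset.sum_congr rfl fun a _ => by rw [eV]; ring
    rw [h1, hπ.2, ← hvs s]
    ring
  · have := hmin (fun s => 1 / (1 - γ) - v s) (fun s => 1 - ∑ a, π s a * r s a)
      (fun s => by
        rw [← hvs s]
        simp only [mul_sub, Finset.sum_sub_distrib]
        simp only [← Finset.sum_mul, h.P_sum, one_mul, hπ.2]
        field_simp
        ring)
      (fun s => by
        rw [sub_nonneg, ← hπ.2 s]
        exact Finset.sum_le_sum fun a _ => mul_le_of_le_one_right (hπ.1 s a) (h.r_le_one s a)) s
    linarith

/-- Performance difference bound, for a flow `d` with conditional policy `π`. -/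
lemma Jret_sub_Jret_le [Nonempty S] (h : MDPAssumptions P r μ0 γ dD) {d π π' : S → A → ℝ}
    (hπ : IsPolicy π) (hπ' : IsPolicy π') (hd0 : ∀ s a, 0 ≤ d s a)
    (hd : BellmanFlow P μ0 γ d) (hfac : ∀ s a, d s a = (∑ a', d s a') * π s a) :
    Jret P r μ0 γ π - Jret P r μ0 γ π' ≤ (1 / (1 - γ)) * expL1 d π π' := by
  obtain ⟨v, hv, -⟩ := exists_value h hπ
  obtain ⟨u, hu, hub⟩ := exists_value h hπ'
  have hγ : 0 < 1 - γ := by linarith [h.γ_lt_one]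
  have hJ : Jret P r μ0 γ π = ∑ s, ∑ a, d s a * r s a := by
    rw [hd.sum_mul_reward hfac hv]
    exact (bellmanFlow_occ h hπ).sum_mul_reward (occ_eq_sum_mul h hπ) hv
  have hJ' : Jret P r μ0 γ π' = (1 - γ) * ∑ s, μ0 s * u s :=
    (bellmanFlow_occ h hπ').sum_mul_reward (occ_eq_sum_mul h hπ') hu
  rw [hJ, hJ', ← hd.sum_mul_eV (r := r) u, expL1, Finset.mul_sum]
  refine Finset.sum_le_sum fun s _ => ?_
  have hms : 0 ≤ ∑ a, d s a := Finset.sum_nonneg fun a _ => hd0 s a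
  have hQ : ∀ a, |eV P r γ u s a + u s| ≤ 1 / (1 - γ) := by
    intro a
    have hlo : 0 ≤ ∑ s', P s a s' * u s' :=
      Finset.sum_nonneg fun s' _ => mul_nonneg (h.P_nonneg s a s') (hub s').1
    have hhi : ∑ s', P s a s' * u s' ≤ 1 / (1 - γ) := by
      calc _ ≤ ∑ s', P s a s' * (1 / (1 - γ)) := Finset.sum_le_sum fun s' _ =>
            mul_le_mul_of_nonneg_left (hub s').2 (h.P_nonneg s a s')
        _ = _ := by rw [← Finset.sum_mul, h.P_sum, one_mul]
    have hid : 1 + γ * (1 / (1 - γ)) = 1 / (1 - γ) := by field_simp; ring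
    rw [eV, sub_add_cancel, abs_of_nonneg
      (add_nonneg (h.r_nonneg s a) (mul_nonneg h.γ_nonneg hlo)), ← hid]
    exact add_le_add (h.r_le_one s a) (mul_le_mul_of_nonneg_left hhi h.γ_nonneg)
  have hdiff : ∑ a, d s a * eV P r γ u s a
      = (∑ a, d s a) * ∑ a, (π s a - π' s a) * (eV P r γ u s a + u s) := by
    rw [Finset.sum_congr rfl fun a _ => by rw [hfac s a, mul_assoc], ← Finset.mul_sum]
    congr 1
    have : ∑ a, (π s a - π' s a) * (eV P r γ u s a + u s) = ∑ a, π s a * eV P r γ u s a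
        - ∑ a, π' s a * eV P r γ u s a + ((∑ a, π s a) - ∑ a, π' s a) * u s := by
      rw [← Finset.sum_sub_distrib, ← Finset.sum_sub_distrib, Finset.sum_mul,
        ← Finset.sum_add_distrib]
      exact Finset.sum_congr rfl fun a _ => by ring
    rw [this, hu, hπ.2, hπ'.2]
    ring
  rw [hdiff, mul_left_comm]
  refine mul_le_mul_of_nonneg_left ?_ hms
  rw [l1Pol, Finset.mul_sum]
  refine Finset.sum_le_sum fun a _ => (le_abs_self _).trans ?_
  rw [abs_mul, mul_comm]
  exact mul_le_mul_of_nonneg_right (hQ a) (abs_nonneg _)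

/-- The gap of two conditionals is controlled by the gap of the joint weights. -/
lemma IsPolicy.sum_mul_abs_sub_le {d d' π π' : S → A → ℝ} (hπ' : IsPolicy π')
    (hd : ∀ s a, 0 ≤ d s a) (hfac : ∀ s a, d s a = (∑ a', d s a') * π s a)
    (hfac' : ∀ s a, d' s a = (∑ a', d' s a') * π' s a) (s : S) :
    (∑ a, d s a) * l1Pol π π' s ≤ 2 * ∑ a, |d s a - d' s a| := by
  have hm : 0 ≤ ∑ a, d s a := Finset.sum_nonneg fun a _ => hd s a
  have hmarg : |∑ a, d' s a - ∑ a, d s a| ≤ ∑ a, |d s a - d' s a| := by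
    rw [← Finset.sum_sub_distrib]
    exact (Finset.abs_sum_le_sum_abs _ _).trans_eq
      (Finset.sum_congr rfl fun a _ => abs_sub_comm _ _)
  calc (∑ a, d s a) * l1Pol π π' s
      ≤ ∑ a, (|d s a - d' s a| + |∑ a, d' s a - ∑ a, d s a| * π' s a) := by
        rw [l1Pol, Finset.mul_sum]
        refine Finset.sum_le_sum fun a _ => ?_
        rw [← abs_of_nonneg (hπ'.1 s a), ← abs_mul, abs_of_nonneg (hπ'.1 s a)]
        nth_rewrite 1 [← abs_of_nonneg hm]
        rw [← abs_mul]
        refine le_trans (le_of_eq ?_) (abs_add_le _ _)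
        congr 1
        linear_combination (-1 : ℝ) * hfac s a + hfac' s a
    _ = ∑ a, |d s a - d' s a| + |∑ a, d' s a - ∑ a, d s a| := by
        rw [Finset.sum_add_distrib, ← Finset.mul_sum, hπ'.2, mul_one]
    _ ≤ _ := by linarith

/-- The `L¹` policy gap is controlled by the weighted `L²` gap of the density ratios. -/
lemma expL1_extractPolicy_le [Nonempty A] (h : MDPAssumptions P r μ0 γ dD) {w w' : S → A → ℝ}
    (hw : ∀ s a, 0 ≤ w s a) (hw' : ∀ s a, 0 ≤ w' s a) :
    expL1 (dstar dD w) (extractPolicy (behPolicy dD) w) (extractPolicy (behPolicy dD) w')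
      ≤ 2 * l2nrm dD fun s a => w' s a - w s a := by
  have hL1 : ∑ s, ∑ a, |dstar dD w s a - dstar dD w' s a|
      ≤ l2nrm dD fun s a => w' s a - w s a := by
    refine Real.le_sqrt_of_sq_le ?_
    have hCS := Finset.sum_mul_sq_le_sq_mul_sq (Finset.univ : Finset (S × A))
      (fun x => Real.sqrt (dD x.1 x.2))
      (fun x => Real.sqrt (dD x.1 x.2) * |w' x.1 x.2 - w x.1 x.2|)
    simp only [mul_pow, ← mul_assoc, Real.mul_self_sqrt (h.dD_nonneg _ _),
      Real.sq_sqrt (h.dD_nonneg _ _), sq_abs, Fintype.sum_prod_type, h.dD_sum, one_mul] at hCS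
    refine le_trans (le_of_eq ?_) hCS
    congr 1
    refine Finset.sum_congr rfl fun s _ => Finset.sum_congr rfl fun a _ => ?_
    rw [dstar, dstar, ← sub_mul, abs_mul, abs_of_nonneg (h.dD_nonneg s a), mul_comm, abs_sub_comm]
  calc _ ≤ ∑ s, 2 * ∑ a, |dstar dD w s a - dstar dD w' s a| :=
        Finset.sum_le_sum fun s _ =>
          (extractPolicy_isPolicy h.dD_nonneg hw').sum_mul_abs_sub_le
            (fun s a => mul_nonneg (hw s a) (h.dD_nonneg s a))
            (dstar_eq_sum_mul_extractPolicy h.dD_nonneg hw)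
            (dstar_eq_sum_mul_extractPolicy h.dD_nonneg hw') s
    _ ≤ _ := by
        rw [← Finset.mul_sum]
        linarith

end Occupancy

section Saddle

variable {P : S → A → S → ℝ} {r : S → A → ℝ} {μ0 : S → ℝ} {γ : ℝ} {dD : S → A → ℝ}
  {f : ℝ → ℝ} {α Bw : ℝ} {v : S → ℝ} {w : S → A → ℝ}

/-- The Lagrangian is affine in `v`, with slope the violation of the Bellman flow equations. -/
lemma Lag_add_sub_Lag (u : S → ℝ) :
    Lag P r μ0 γ dD f α (v + u) w - Lag P r μ0 γ dD f α v w
      = ∑ s, ((1 - γ) * μ0 s + γ * ∑ s', ∑ a', P s' a' s * dstar dD w s' a'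
          - ∑ a, dstar dD w s a) * u s := by
  have h1 : ∑ s, ∑ a, dD s a * (w s a * eV P r γ (v + u) s a)
      = ∑ s, ∑ a, dD s a * (w s a * eV P r γ v s a)
        + γ * ∑ s, ∑ a, dstar dD w s a * ∑ s', P s a s' * u s'
        - ∑ s, (∑ a, dstar dD w s a) * u s := by
    simp only [Finset.sum_mul]
    rw [Finset.mul_sum, ← Finset.sum_add_distrib, ← Finset.sum_sub_distrib]
    refine Finset.sum_congr rfl fun s _ => ?_
    rw [Finset.mul_sum, ← Finset.sum_add_distrib, ← Finset.sum_sub_distrib]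
    refine Finset.sum_congr rfl fun a _ => ?_
    simp only [eV, dstar, Pi.add_apply, mul_add, Finset.sum_add_distrib]
    ring
  rw [Lag, Lag, h1, sum_mul_transition]
  simp only [sub_mul, add_mul, Finset.sum_sub_distrib, Finset.sum_add_distrib, Pi.add_apply,
    mul_add, mul_assoc, ← Finset.mul_sum]
  ring

lemma IsSaddleB.bellmanFlow (h : IsSaddleB P r μ0 γ dD f α Bw v w) :
    BellmanFlow P μ0 γ (dstar dD w) := by
  set c : S → ℝ := fun s => (1 - γ) * μ0 s + γ * ∑ s', ∑ a', P s' a' s * dstar dD w s' a'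
          - ∑ a, dstar dD w s a with hc
  have hmin := h.2.1 (v + -c)
  have hdiff := Lag_add_sub_Lag (P := P) (r := r) (μ0 := μ0) (γ := γ) (dD := dD) (f := f)
    (α := α) (v := v) (w := w) (-c)
  have hsq : ∑ s, c s * c s = 0 := by
    refine le_antisymm ?_ (Finset.sum_nonneg fun s _ => mul_self_nonneg _)
    have : ∑ s, c s * (-c) s = -∑ s, c s * c s := by simp
    change _ = ∑ s, c s * (-c) s at hdiff
    linarith
  intro s
  have h0 := (Finset.sum_eq_zero_iff_of_nonneg fun s _ => mul_self_nonneg (c s)).mp hsq s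
    (Finset.mem_univ s)
  have := mul_self_eq_zero.mp h0
  simp only [hc] at this
  linarith

/-- Strong concavity in `w`, along the segment from `w` to `w'`. -/
lemma Lag_segment_ge (hdD : ∀ s a, 0 ≤ dD s a) (hα : 0 < α) {Mf : ℝ}
    (hf : StrongConvexOn Set.univ Mf f) (w' : S → A → ℝ) {t : ℝ} (ht0 : 0 ≤ t) (ht1 : t ≤ 1) :
    (1 - t) * Lag P r μ0 γ dD f α v w + t * Lag P r μ0 γ dD f α v w'
        + (1 - t) * t * (α * Mf / 2 * ∑ s, ∑ a, dD s a * (w' s a - w s a) ^ 2)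
      ≤ Lag P r μ0 γ dD f α v fun s a => (1 - t) * w s a + t * w' s a := by
  have hfsum : ∑ s, ∑ a, dD s a * f ((1 - t) * w s a + t * w' s a)
      ≤ (1 - t) * ∑ s, ∑ a, dD s a * f (w s a) + t * ∑ s, ∑ a, dD s a * f (w' s a)
        - (1 - t) * t * (Mf / 2 * ∑ s, ∑ a, dD s a * (w' s a - w s a) ^ 2) := by
    simp only [Finset.mul_sum, ← Finset.sum_add_distrib, ← Finset.sum_sub_distrib]
    refine Finset.sum_le_sum fun s _ => Finset.sum_le_sum fun a _ => ?_
    have h1 := hf.2 (Set.mem_univ (w s a)) (Set.mem_univ (w' s a)) (sub_nonneg.mpr ht1) ht0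
      (sub_add_cancel 1 t)
    simp only [smul_eq_mul, Real.norm_eq_abs, sq_abs] at h1
    refine (mul_le_mul_of_nonneg_left h1 (hdD s a)).trans_eq ?_
    ring
  have hlin : ∑ s, ∑ a, dD s a * (((1 - t) * w s a + t * w' s a) * eV P r γ v s a)
      = (1 - t) * ∑ s, ∑ a, dD s a * (w s a * eV P r γ v s a)
        + t * ∑ s, ∑ a, dD s a * (w' s a * eV P r γ v s a) := by
    simp only [Finset.mul_sum, ← Finset.sum_add_distrib]
    exact Finset.sum_congr rfl fun s _ => Finset.sum_congr rfl fun a _ => by ring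
  have hα' := mul_le_mul_of_nonneg_left hfsum hα.le
  simp only [Lag]
  rw [hlin]
  linarith

/-- Quadratic growth of the Lagrangian gap around the saddle point. -/
lemma IsSaddleB.quadratic_growth (h : IsSaddleB P r μ0 γ dD f α Bw v w)
    (hdD : ∀ s a, 0 ≤ dD s a) (hα : 0 < α) {Mf : ℝ}
    (hf : StrongConvexOn Set.univ Mf f) {w' : S → A → ℝ}
    (hw' : ∀ s a, 0 ≤ w' s a ∧ w' s a ≤ Bw) :
    α * Mf / 2 * ∑ s, ∑ a, dD s a * (w' s a - w s a) ^ 2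
      ≤ Lag P r μ0 γ dD f α v w - Lag P r μ0 γ dD f α v w' := by
  set G := α * Mf / 2 * ∑ s, ∑ a, dD s a * (w' s a - w s a) ^ 2
  have hineq : ∀ t ∈ Set.Ioo (0 : ℝ) 1, (1 - t) * G
      ≤ Lag P r μ0 γ dD f α v w - Lag P r μ0 γ dD f α v w' := by
    rintro t ⟨ht0, ht1⟩
    have h1 := Lag_segment_ge (P := P) (r := r) (μ0 := μ0) (γ := γ) (v := v) (w := w) hdD hα hf w'
      ht0.le ht1.le
    have h2 := h.2.2 (fun s a => (1 - t) * w s a + t * w' s a) fun s a => by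
      obtain ⟨hl, hu⟩ := h.1 s a
      obtain ⟨hl', hu'⟩ := hw' s a
      constructor
      · exact add_nonneg (mul_nonneg (by linarith) hl) (mul_nonneg ht0.le hl')
      · nlinarith
    have h3 := h1.trans h2
    refine le_of_mul_le_mul_left ?_ ht0
    change _ + (1 - t) * t * G ≤ _ at h3
    linarith
  have hlim : Filter.Tendsto (fun t : ℝ => (1 - t) * G) (nhdsWithin 0 (Set.Ioi 0))
      (nhds ((1 - 0) * G)) :=
    Filter.Tendsto.mono_left (Continuous.tendsto (by fun_prop) 0) nhdsWithin_le_nhds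
  have := le_of_tendsto hlim (Filter.eventually_of_mem (Ioo_mem_nhdsGT one_pos) hineq)
  linarith

/-- A uniform deviation bound makes the algorithm's output near-optimal for `L(v*, ·)`. -/
lemma IsProRLOutput.Lag_gap_le {V : Finset (S → ℝ)} {W : Finset (S → A → ℝ)} {n n0 : ℕ}
    {D : Fin n → (S × A) × S} {D0 : Fin n0 → S} {vhat : S → ℝ} {what : S → A → ℝ}
    (hout : IsProRLOutput r γ f α V W D D0 vhat what)
    (h : IsSaddleB P r μ0 γ dD f α Bw v w) (hv : v ∈ V) (hw : w ∈ W) {ε : ℝ}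
    (hdev : ∀ v ∈ V, ∀ w ∈ W,
      |empLag r γ f α D D0 v w - Lag P r μ0 γ dD f α v w| ≤ ε) :
    Lag P r μ0 γ dD f α v w - Lag P r μ0 γ dD f α v what ≤ 2 * ε := by
  obtain ⟨u, hu, humin⟩ := V.exists_min_image (fun v => empLag r γ f α D D0 v w) ⟨v, hv⟩
  obtain ⟨-, hwhat, hmin, hmax⟩ := hout
  have h1 := h.2.1 u
  have h2 := abs_le.mp (hdev u hu w hw)
  have h3 := hmax w hw u hu humin
  have h4 := hmin v hv
  have h5 := abs_le.mp (hdev v hv what hwhat)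
  linarith

end Saddle

section Deviation

variable {P : S → A → S → ℝ} {r : S → A → ℝ} {μ0 : S → ℝ} {γ : ℝ} {dD : S → A → ℝ}
  {f : ℝ → ℝ} {α : ℝ}

/-- The per-transition contribution to the empirical Lagrangian. -/
noncomputable def transitionLag (r : S → A → ℝ) (γ : ℝ) (f : ℝ → ℝ) (α : ℝ) (v : S → ℝ)
    (w : S → A → ℝ) (x : (S × A) × S) : ℝ :=
  -α * f (w x.1.1 x.1.2) + w x.1.1 x.1.2 * (r x.1.1 x.1.2 + γ * v x.2 - v x.1.1)

lemma empLag_eq {n n0 : ℕ} (D : Fin n → (S × A) × S) (D0 : Fin n0 → S) (v : S → ℝ)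
    (w : S → A → ℝ) :
    empLag r γ f α D D0 v w = (1 - γ) * ((n0 : ℝ)⁻¹ * ∑ j, v (D0 j))
      + (n : ℝ)⁻¹ * ∑ i, transitionLag r γ f α v w (D i) := by
  simp only [empLag, transitionLag, Finset.sum_add_distrib, ← Finset.mul_sum]
  ring

lemma tupleWeight_nonneg (h : MDPAssumptions P r μ0 γ dD) (x : (S × A) × S) :
    0 ≤ tupleWeight P dD x := mul_nonneg (h.dD_nonneg _ _) (h.P_nonneg _ _ _)

lemma sum_tupleWeight (h : MDPAssumptions P r μ0 γ dD) : ∑ x, tupleWeight P dD x = 1 := by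
  simp only [tupleWeight, Fintype.sum_prod_type, ← Finset.mul_sum, h.P_sum, mul_one, h.dD_sum]

lemma Lag_eq (h : MDPAssumptions P r μ0 γ dD) (v : S → ℝ) (w : S → A → ℝ) :
    Lag P r μ0 γ dD f α v w = (1 - γ) * ∑ s, μ0 s * v s
      + ∑ x, tupleWeight P dD x * transitionLag r γ f α v w x := by
  have hcond : ∀ s a, ∑ s', dD s a * P s a s' *
        (-α * f (w s a) + w s a * (r s a + γ * v s' - v s))
      = -α * (dD s a * f (w s a)) + dD s a * (w s a * eV P r γ v s a) := by
    intro s a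
    have : ∀ s', dD s a * P s a s' * (-α * f (w s a) + w s a * (r s a + γ * v s' - v s))
        = dD s a * (-α * f (w s a) + w s a * (r s a - v s)) * P s a s'
          + dD s a * w s a * γ * (P s a s' * v s') := fun s' => by ring
    simp only [this, Finset.sum_add_distrib, ← Finset.mul_sum, h.P_sum, eV]
    ring
  simp only [Lag, tupleWeight, transitionLag, Fintype.sum_prod_type, hcond,
    Finset.sum_add_distrib, ← Finset.mul_sum]
  ring

lemma abs_transitionLag_le (h : MDPAssumptions P r μ0 γ dD) (hα : 0 < α) {Bw Bf Bv : ℝ}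
    (hf : ∀ x, 0 ≤ x → x ≤ Bw → |f x| ≤ Bf) {v : S → ℝ} (hv : ∀ s, |v s| ≤ Bv)
    {w : S → A → ℝ} (hw : ∀ s a, 0 ≤ w s a ∧ w s a ≤ Bw) (x : (S × A) × S) :
    |transitionLag r γ f α v w x| ≤ α * Bf + Bw * ((1 + γ) * Bv + 1) := by
  obtain ⟨⟨s, a⟩, s'⟩ := x
  obtain ⟨hl, hu⟩ := hw s a
  refine (abs_add_le _ _).trans (add_le_add ?_ ?_)
  · rw [abs_mul, abs_neg, abs_of_pos hα]
    exact mul_le_mul_of_nonneg_left (hf _ hl hu) hα.le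
  · rw [abs_mul, abs_of_nonneg hl]
    refine mul_le_mul hu ?_ (abs_nonneg _) (hl.trans hu)
    have h1 := abs_le.mp (hv s)
    have h2 := abs_le.mp (hv s')
    have h3 := h.r_nonneg s a
    have h4 := h.r_le_one s a
    have h5 := mul_le_mul_of_nonneg_left h2.1 h.γ_nonneg
    have h6 := mul_le_mul_of_nonneg_left h2.2 h.γ_nonneg
    exact abs_le.mpr ⟨by dsimp only; linarith, by dsimp only; linarith⟩

variable [MeasurableSpace S] [MeasurableSpace A]
  [MeasurableSingletonClass S] [MeasurableSingletonClass A]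

/-- With probability at least `1 - δ`, the empirical Lagrangian is uniformly close to the
population one. -/
lemma dataMeasure_uniform_deviation (h : MDPAssumptions P r μ0 γ dD) (hα : 0 < α)
    {δ Bw Bf Bv : ℝ} (hδ0 : 0 < δ) (hδ1 : δ < 1) (hBw : 0 < Bw) (hBv : 0 < Bv)
    (hf : ∀ x, 0 ≤ x → x ≤ Bw → |f x| ≤ Bf) {V : Finset (S → ℝ)} {W : Finset (S → A → ℝ)}
    (hV : ∀ v ∈ V, ∀ s, |v s| ≤ Bv) (hW : ∀ w ∈ W, ∀ s a, 0 ≤ w s a ∧ w s a ≤ Bw)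
    {n n0 : ℕ} (hn : 0 < n) (hn0 : 0 < n0) :
    1 - ENNReal.ofReal δ ≤ dataMeasure P dD μ0 n n0 {ω | ∀ v ∈ V, ∀ w ∈ W,
      |empLag r γ f α ω.1 ω.2 v w - Lag P r μ0 γ dD f α v w|
        ≤ epsStat γ α Bv Bf Bw ((1 + γ) * Bv + 1) δ V.card W.card n n0} := by
  have hprobμ := isProbabilityMeasure_discMeasure (fun s => (h.μ0_pos s).le) h.μ0_sum
  have hprobτ := isProbabilityMeasure_discMeasure (tupleWeight_nonneg h) (sum_tupleWeight h)
  have hBf : 0 ≤ Bf := (abs_nonneg _).trans (hf 0 le_rfl hBw.le)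
  have hγ := h.γ_nonneg
  have hγ1 : 0 ≤ 1 - γ := by linarith [h.γ_lt_one]
  have hC : 0 < α * Bf + Bw * ((1 + γ) * Bv + 1) := by positivity
  have hdevV := hoeffding_abs_mean_uniform (discMeasure μ0) hn0 V (g := fun v s => v s)
    (fun v => measurable_of_finite v) hBv hδ0 hδ1 hV
  have hdevW := hoeffding_abs_mean_uniform (discMeasure (tupleWeight P dD)) hn (V ×ˢ W)
    (g := fun k x => transitionLag r γ f α k.1 k.2 x) (fun k => measurable_of_finite _) hC
    hδ0 hδ1 (fun k hk x => abs_transitionLag_le h hα hf (hV k.1 (Finset.mem_product.mp hk).1)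
      (hW k.2 (Finset.mem_product.mp hk).2) x)
  simp only [integral_discMeasure (fun s => (h.μ0_pos s).le) h.μ0_sum] at hdevV
  simp only [integral_discMeasure (tupleWeight_nonneg h) (sum_tupleWeight h),
    Finset.card_product, Nat.cast_mul] at hdevW
  refine one_sub_ofReal_le_prod _ _ hδ0.le hdevW hdevV fun ω hωW hωV v hv w hw => ?_
  simp only [Set.mem_ofPred_eq, not_exists, not_and, not_lt] at hωW hωV
  have h1 := mul_le_mul_of_nonneg_left (hωV v hv) hγ1
  rw [← abs_of_nonneg hγ1, ← abs_mul, abs_of_nonneg hγ1, mul_sub, ← mul_assoc (1 - γ) Bv] at h1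
  have h2 := hωW (v, w) (Finset.mem_product.mpr ⟨hv, hw⟩)
  rw [empLag_eq, Lag_eq h, add_sub_add_comm]
  exact (abs_add_le _ _).trans (add_le_add h1 h2)

end Deviation

/-- Theorem 4: PRO-RL for the constrained & regularized LP. -/
theorem stmt5
    {S A : Type*} [Fintype S] [Fintype A] [Nonempty S] [Nonempty A]
    [MeasurableSpace S] [MeasurableSpace A]
    [MeasurableSingletonClass S] [MeasurableSingletonClass A]
    (P : S → A → S → ℝ) (r : S → A → ℝ) (μ0 : S → ℝ) (γ : ℝ) (dD : S → A → ℝ)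
    (hMDP : MDPAssumptions P r μ0 γ dD)
    -- the data distribution is the occupancy of the behavior policy
    (hocc : ∀ s a, dD s a = occ P μ0 γ (behPolicy dD) s a)
    (f f' : ℝ → ℝ) (α δ Bw : ℝ) (hα : 0 < α) (hδ0 : 0 < δ) (hδ1 : δ < 1)
    (hBw : 1 < Bw)
    (Mf Bf' Bf Bv Be : ℝ)
    (hreg : RegAssumptions f f' Mf Bw Bf' Bf)
    (hBv : Bv = (α * Bf' + 1) / (1 - γ)) (hBe : Be = (1 + γ) * Bv + 1)
    (vst : S → ℝ) (wst : S → A → ℝ)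
    (hsad : IsSaddleB P r μ0 γ dD f α Bw vst wst)
    (V : Finset (S → ℝ)) (W : Finset (S → A → ℝ))
    (hA2 : vst ∈ V) (hA3 : wst ∈ W)
    (hA4 : ∀ w ∈ W, ∀ s a, 0 ≤ w s a ∧ w s a ≤ Bw)
    (hA6 : ∀ v ∈ V, ∀ s, |v s| ≤ Bv)
    (n n0 : ℕ) (hn : 0 < n) (hn0 : 0 < n0)
    (vhat : (Fin n → (S × A) × S) × (Fin n0 → S) → S → ℝ)
    (what : (Fin n → (S × A) × S) × (Fin n0 → S) → S → A → ℝ)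
    (halg : ∀ ω, IsProRLOutput r γ f α V W ω.1 ω.2 (vhat ω) (what ω)) :
    1 - ENNReal.ofReal δ ≤
      dataMeasure P dD μ0 n n0 {ω |
        Jret P r μ0 γ (extractPolicy (behPolicy dD) wst)
            - Jret P r μ0 γ (extractPolicy (behPolicy dD) (what ω))
          ≤ (1 / (1 - γ)) * expL1 (dstar dD wst) (extractPolicy (behPolicy dD) wst)
              (extractPolicy (behPolicy dD) (what ω)) ∧
        (1 / (1 - γ)) * expL1 (dstar dD wst) (extractPolicy (behPolicy dD) wst)
            (extractPolicy (behPolicy dD) (what ω))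
          ≤ (2 / (1 - γ)) * l2nrm dD (fun s a => what ω s a - wst s a) ∧
        (2 / (1 - γ)) * l2nrm dD (fun s a => what ω s a - wst s a)
          ≤ (4 / (1 - γ)) *
              Real.sqrt (epsStat γ α Bv Bf Bw Be δ V.card W.card n n0 / (α * Mf)) } := by
  have hγ : 0 < 1 - γ := by linarith [hMDP.γ_lt_one]
  have hBf' : 0 ≤ Bf' := (abs_nonneg _).trans (hreg.f'_bdd 0 le_rfl (by linarith))
  have hBv0 : 0 < Bv := by
    rw [hBv]
    positivity
  subst hBe
  refine (dataMeasure_uniform_deviation hMDP hα hδ0 hδ1 (by linarith) hBv0 hreg.f_bdd hA6 hA4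
    hn hn0).trans (measure_mono fun ω hω => ?_)
  have hwhat := hA4 _ (halg ω).2.1
  have hwst0 : ∀ s a, 0 ≤ wst s a := fun s a => (hsad.1 s a).1
  have hwhat0 : ∀ s a, 0 ≤ what ω s a := fun s a => (hwhat s a).1
  refine ⟨?_, ?_, ?_⟩
  · exact Jret_sub_Jret_le hMDP (extractPolicy_isPolicy hMDP.dD_nonneg hwst0)
      (extractPolicy_isPolicy hMDP.dD_nonneg hwhat0)
      (fun s a => mul_nonneg (hwst0 s a) (hMDP.dD_nonneg s a)) hsad.bellmanFlow
      (dstar_eq_sum_mul_extractPolicy hMDP.dD_nonneg hwst0)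
  · rw [show 2 / (1 - γ) = 1 / (1 - γ) * 2 by ring, mul_assoc]
    exact mul_le_mul_of_nonneg_left (expL1_extractPolicy_le hMDP hwst0 hwhat0) (by positivity)
  · rw [show 4 / (1 - γ) = 2 / (1 - γ) * 2 by ring, mul_assoc]
    refine mul_le_mul_of_nonneg_left ?_ (by positivity)
    have hgap := (hsad.quadratic_growth hMDP.dD_nonneg hα hreg.strong hwhat).trans
      ((halg ω).Lag_gap_le hsad hA2 hA3 hω)
    have hM := mul_pos hα hreg.Mf_pos
    have h4 : (2 : ℝ) = Real.sqrt 4 := by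
      rw [show (4 : ℝ) = 2 ^ 2 by norm_num, Real.sqrt_sq two_pos.le]
    rw [l2nrm, h4, ← Real.sqrt_mul (by norm_num)]
    refine Real.sqrt_le_sqrt ?_
    rw [← mul_div_assoc, le_div_iff₀ hM]
    linarith
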